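/- arXiv:2008.13179 — 2 statements merged into one kernel-verified Lean document; each statement's English description precedes it below -/
import Mathlib

section
/- (Kelvin transform and the Laplacian.) Let n ≥ 3, Ξ₀ > 0, and let U ⊆ ℝⁿ∖{0} be open with f : U → ℝ of class C². Let ι(ξ) := (Ξ₀/|ξ|)²·ξ (so ι is an involution of ℝⁿ∖{0}), let U* = ι(U), and define the Kelvin transform f⋆ : U* → ℝ by f⋆(ξ*) = (Ξ₀/|ξ*|)^{n−2}·f((Ξ₀/|ξ*|)²·ξ*). Then f⋆ is C² on U*, and for every ξ ∈ U, with ξ* = ι(ξ): Δf⋆(ξ*) = (|ξ|/Ξ₀)^{n+2}·Δf(ξ). -/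
open Real Metric

noncomputable section

/-- The Laplacian of `f : ℝⁿ → ℝ`, as the sum of the second directional derivatives
along the standard orthonormal basis. -/
def lap (n : ℕ) (f : EuclideanSpace ℝ (Fin n) → ℝ) (x : EuclideanSpace ℝ (Fin n)) : ℝ :=
  ∑ i : Fin n, fderiv ℝ (fun y => fderiv ℝ f y (EuclideanSpace.single i 1)) x
    (EuclideanSpace.single i 1)

/-- The Kelvin inversion `ι(ξ) = (Ξ₀/|ξ|)²·ξ` of the coordinates. -/
def kelvinPt (n : ℕ) (Ξ₀ : ℝ) (ξ : EuclideanSpace ℝ (Fin n)) : EuclideanSpace ℝ (Fin n) :=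
  ((Ξ₀ / ‖ξ‖) ^ 2 : ℝ) • ξ

/-- The Kelvin transform `f⋆(ξ*) = (Ξ₀/|ξ*|)^{n−2}·f((Ξ₀/|ξ*|)²·ξ*)` of a function. -/
def kelvin (n : ℕ) (Ξ₀ : ℝ) (f : EuclideanSpace ℝ (Fin n) → ℝ)
    (ξs : EuclideanSpace ℝ (Fin n)) : ℝ :=
  (Ξ₀ / ‖ξs‖) ^ (n - 2) * f (kelvinPt n Ξ₀ ξs)

/-!
The inversion `ι` in the sphere of center `c` and radius `R` is conformal: `Dι(x)` is the reflection
in the hyperplane orthogonal to `x - c`, scaled by `(R / ‖x - c‖)²`. Hence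
`Δ (f ∘ ι) = (R / ‖x - c‖)⁴ (Δ f) ∘ ι + Df (Δ ι)`, where `Δ ι` is the radial vector
`-2 (n - 2) R² ‖x - c‖⁻⁴ (x - c)`. The weight `w = ‖x - c‖ ^ (2 - n)` is harmonic with radial
gradient, so `Δ (w • (f ∘ ι)) = w • Δ (f ∘ ι) + 2 D(f ∘ ι) (∇ w)`. As `Dι` reverses the radial
direction, the cross term equals `-w • Df (Δ ι)`, and only the multiple of `(Δ f) ∘ ι` survives.
-/

section Laplacian

open Laplacian Gradient

variable {E F G : Type*} [NormedAddCommGroup F] [NormedSpace ℝ F]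

section SecondDerivative

variable [NormedAddCommGroup E] [NormedSpace ℝ E] [NormedAddCommGroup G] [NormedSpace ℝ G]

lemma differentiableAt_fderiv_of_contDiffAt_two {f : E → F} {x : E} (hf : ContDiffAt ℝ 2 f x) :
    DifferentiableAt ℝ (fderiv ℝ f) x :=
  (hf.fderiv_right (m := 1) le_rfl).differentiableAt one_ne_zero

lemma eventually_differentiableAt_of_contDiffAt_two {f : E → F} {x : E}
    (hf : ContDiffAt ℝ 2 f x) : ∀ᶠ y in nhds x, DifferentiableAt ℝ f y :=
  (hf.eventually (by simp)).mono fun _ hy => hy.differentiableAt two_ne_zero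

lemma fderiv_fderiv_smul_apply {g : E → ℝ} {f : E → F} {x : E}
    (hg : ContDiffAt ℝ 2 g x) (hf : ContDiffAt ℝ 2 f x) (v w : E) :
    fderiv ℝ (fderiv ℝ (g • f)) x v w =
      g x • fderiv ℝ (fderiv ℝ f) x v w + fderiv ℝ g x v • fderiv ℝ f x w
        + fderiv ℝ g x w • fderiv ℝ f x v + fderiv ℝ (fderiv ℝ g) x v w • f x := by
  have hfderiv : fderiv ℝ (g • f) =ᶠ[nhds x]
      fun y => g y • fderiv ℝ f y + (fderiv ℝ g y).smulRight (f y) := by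
    filter_upwards [eventually_differentiableAt_of_contDiffAt_two hg,
      eventually_differentiableAt_of_contDiffAt_two hf] with y hgy hfy
    exact fderiv_smul hgy hfy
  have hgdf := (hg.differentiableAt two_ne_zero).hasFDerivAt.smul
    (differentiableAt_fderiv_of_contDiffAt_two hf).hasFDerivAt
  have hdgf := ((ContinuousLinearMap.smulRightL ℝ E F).hasFDerivAt_of_bilinear
    (differentiableAt_fderiv_of_contDiffAt_two hg).hasFDerivAt
    (hf.differentiableAt two_ne_zero).hasFDerivAt)
  rw [((hgdf.add hdgf).congr_of_eventuallyEq hfderiv).fderiv]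
  simp only [ContinuousLinearMap.precompR_apply, ContinuousLinearMap.compL_apply, add_apply,
    smul_apply, ContinuousLinearMap.smulRight_apply, ContinuousLinearMap.comp_apply,
    ContinuousLinearMap.smulRightL_apply_apply, ContinuousLinearMap.precompL_apply]
  abel

lemma fderiv_fderiv_comp_apply {f : G → F} {h : E → G} {x : E}
    (hf : ContDiffAt ℝ 2 f (h x)) (hh : ContDiffAt ℝ 2 h x) (v w : E) :
    fderiv ℝ (fderiv ℝ (f ∘ h)) x v w =
      fderiv ℝ (fderiv ℝ f) (h x) (fderiv ℝ h x v) (fderiv ℝ h x w)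
        + fderiv ℝ f (h x) (fderiv ℝ (fderiv ℝ h) x v w) := by
  have hfderiv : fderiv ℝ (f ∘ h) =ᶠ[nhds x] fun y => (fderiv ℝ f (h y)).comp (fderiv ℝ h y) := by
    filter_upwards [hh.continuousAt.eventually (eventually_differentiableAt_of_contDiffAt_two hf),
      eventually_differentiableAt_of_contDiffAt_two hh] with y hfy hhy
    exact fderiv_comp y hfy hhy
  have hf' : HasFDerivAt (fun y => fderiv ℝ f (h y)) _ x :=
    (differentiableAt_fderiv_of_contDiffAt_two hf).hasFDerivAt.comp x
      (hh.differentiableAt two_ne_zero).hasFDerivAt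
  rw [hfderiv.fderiv_eq,
    (hf'.clm_comp (differentiableAt_fderiv_of_contDiffAt_two hh).hasFDerivAt).fderiv]
  simp [add_comm]

end SecondDerivative

variable [NormedAddCommGroup E] [InnerProductSpace ℝ E] [FiniteDimensional ℝ E]
  [NormedAddCommGroup G] [InnerProductSpace ℝ G] [FiniteDimensional ℝ G]

lemma laplacian_eq_sum_fderiv_fderiv {ι : Type*} [Fintype ι] (v : OrthonormalBasis ι ℝ E)
    (f : E → F) (x : E) : Δ f x = ∑ i, fderiv ℝ (fderiv ℝ f) x (v i) (v i) := by
  simp [InnerProductSpace.laplacian_eq_iteratedFDeriv_orthonormalBasis f v,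
    iteratedFDeriv_two_apply]

lemma laplacian_smul_of_contDiffAt {g : E → ℝ} {f : E → F} {x : E} (hg : ContDiffAt ℝ 2 g x)
    (hf : ContDiffAt ℝ 2 f x) :
    Δ (g • f) x = g x • Δ f x + (2 : ℝ) • fderiv ℝ f x (∇ g x) + Δ g x • f x := by
  let b := stdOrthonormalBasis ℝ E
  have hcross : ∑ i, fderiv ℝ g x (b i) • fderiv ℝ f x (b i) = fderiv ℝ f x (∇ g x) := by
    conv_rhs => rw [← b.sum_repr' (∇ g x)]
    simp [inner_gradient_right]
  simp only [laplacian_eq_sum_fderiv_fderiv b, fderiv_fderiv_smul_apply hg hf,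
    Finset.sum_add_distrib, ← Finset.smul_sum, ← Finset.sum_smul, hcross]
  module

lemma laplacian_comp_of_fderiv_eq_smul_isometry {f : G → F} {h : E → G} {x : E}
    {r : ℝ} {L : E ≃ₗᵢ[ℝ] G} (hf : ContDiffAt ℝ 2 f (h x)) (hh : ContDiffAt ℝ 2 h x)
    (hL : ∀ v, fderiv ℝ h x v = r • L v) :
    Δ (f ∘ h) x = r ^ 2 • Δ f (h x) + fderiv ℝ f (h x) (Δ h x) := by
  let b := stdOrthonormalBasis ℝ E
  rw [laplacian_eq_sum_fderiv_fderiv b (f ∘ h), laplacian_eq_sum_fderiv_fderiv (b.map L) f,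
    laplacian_eq_sum_fderiv_fderiv b h]
  simp only [fderiv_fderiv_comp_apply hf hh, hL, Finset.sum_add_distrib, map_sum, map_smul,
    smul_apply, smul_smul, ← sq, Finset.smul_sum, OrthonormalBasis.map_apply]

lemma laplacian_sub_const (c x : E) : Δ (fun y : E => y - c) x = 0 := by
  have hfderiv : fderiv ℝ (fun y : E => y - c) = fun _ => .id ℝ E := by
    ext1 y
    exact ((hasFDerivAt_id y).sub_const c).fderiv
  simp [laplacian_eq_sum_fderiv_fderiv (stdOrthonormalBasis ℝ E), hfderiv]

end Laplacian

section NormZPow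

open Laplacian Gradient Module

variable {E : Type*} [NormedAddCommGroup E] [InnerProductSpace ℝ E] {c x : E}

lemma contDiffAt_norm_sub_zpow {m : WithTop ℕ∞} (k : ℤ) (hx : x ≠ c) :
    ContDiffAt ℝ m (fun y => ‖y - c‖ ^ k) x := by
  have hnorm : ‖x - c‖ ≠ 0 := norm_ne_zero_iff.2 (sub_ne_zero.2 hx)
  exact (analyticAt_id.zpow (n := k) hnorm).contDiffAt.comp x
    ((contDiffAt_id.sub contDiffAt_const).norm ℝ (sub_ne_zero.2 hx))

lemma hasFDerivAt_norm_sub_zpow (k : ℤ) (hx : x ≠ c) :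
    HasFDerivAt (fun y => ‖y - c‖ ^ k) (innerSL ℝ ((k * ‖x - c‖ ^ (k - 2)) • (x - c))) x := by
  have hnorm : ‖x - c‖ ≠ 0 := norm_ne_zero_iff.2 (sub_ne_zero.2 hx)
  have hsqrt := (((hasFDerivAt_id x).sub_const c).norm_sq).sqrt (pow_ne_zero 2 hnorm)
  have hnormDeriv : HasFDerivAt (fun y => ‖y - c‖) (innerSL ℝ (‖x - c‖⁻¹ • (x - c))) x := by
    simp only [Real.sqrt_sq (norm_nonneg _), id] at hsqrt
    refine hsqrt.congr_fderiv ?_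
    ext v
    simp only [one_div, mul_inv_rev, ContinuousLinearMap.comp_id, smul_apply, coe_innerSL_apply,
      nsmul_eq_mul, Nat.cast_ofNat, smul_eq_mul, map_smul]
    field_simp
  refine ((hasDerivAt_zpow k _ (.inl hnorm)).comp_hasFDerivAt x hnormDeriv).congr_fderiv ?_
  ext v
  simp only [zpow_sub₀ hnorm, zpow_ofNat, pow_one, map_smul, smul_apply, coe_innerSL_apply,
    smul_eq_mul]
  field_simp

lemma gradient_norm_sub_zpow [CompleteSpace E] (k : ℤ) (hx : x ≠ c) :
    ∇ (fun y => ‖y - c‖ ^ k) x = (k * ‖x - c‖ ^ (k - 2)) • (x - c) :=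
  HasGradientAt.gradient (hasFDerivAt_norm_sub_zpow k hx)

lemma fderiv_fderiv_norm_sub_zpow_apply_self (k : ℤ) (hx : x ≠ c) (v : E) :
    fderiv ℝ (fderiv ℝ fun y => ‖y - c‖ ^ k) x v v =
      k * (k - 2) * ‖x - c‖ ^ (k - 2 - 2) * inner ℝ v (x - c) ^ 2
        + k * ‖x - c‖ ^ (k - 2) * ‖v‖ ^ 2 := by
  have hfderiv : fderiv ℝ (fun y => ‖y - c‖ ^ k) =ᶠ[nhds x]
      fun y => innerSL ℝ ((k * ‖y - c‖ ^ (k - 2)) • (y - c)) := by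
    filter_upwards [isOpen_ne.mem_nhds hx] with y hy
    exact (hasFDerivAt_norm_sub_zpow k hy).fderiv
  have hgrad := (innerSL ℝ).hasFDerivAt.comp x
    (((hasFDerivAt_norm_sub_zpow (k - 2) hx).const_mul (k : ℝ)).smul
      ((hasFDerivAt_id x).sub_const c))
  rw [(hgrad.congr_of_eventuallyEq hfderiv).fderiv]
  change inner ℝ ((k * ‖x - c‖ ^ (k - 2)) • v
    + (k * inner ℝ (((k - 2 : ℤ) * ‖x - c‖ ^ (k - 2 - 2)) • (x - c)) v) • (x - c)) v = _
  simp only [inner_add_left, real_inner_smul_left, real_inner_self_eq_norm_sq,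
    real_inner_comm v (x - c), Int.cast_sub, Int.cast_ofNat]
  ring

lemma laplacian_norm_sub_zpow [FiniteDimensional ℝ E] (k : ℤ) (hx : x ≠ c) :
    Δ (fun y => ‖y - c‖ ^ k) x = k * (k + finrank ℝ E - 2) * ‖x - c‖ ^ (k - 2) := by
  have hnorm : ‖x - c‖ ≠ 0 := norm_ne_zero_iff.2 (sub_ne_zero.2 hx)
  have hpow : ‖x - c‖ ^ (k - 2 - 2) * ‖x - c‖ ^ 2 = ‖x - c‖ ^ (k - 2) := by
    rw [zpow_sub₀ hnorm (k - 2)]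
    exact div_mul_cancel₀ _ (pow_ne_zero 2 hnorm)
  let b := stdOrthonormalBasis ℝ E
  simp only [laplacian_eq_sum_fderiv_fderiv b, fderiv_fderiv_norm_sub_zpow_apply_self k hx,
    Finset.sum_add_distrib, ← Finset.mul_sum, b.sum_sq_inner_right, b.norm_eq_one, one_pow,
    Finset.sum_const, Finset.card_univ, Fintype.card_fin, nsmul_eq_mul, mul_one]
  linear_combination k * (k - 2) * hpow

end NormZPow

section Kelvin

open EuclideanGeometry Laplacian Module

variable {E F : Type*} [NormedAddCommGroup E] [InnerProductSpace ℝ E]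
  [NormedAddCommGroup F] [NormedSpace ℝ F]

/-- The Kelvin transform of `f` with respect to the sphere with center `c` and radius `R`. The
exponent `dim E - 2` is an integer, so that no truncation occurs in dimension one. -/
def kelvinTransform (c : E) (R : ℝ) (f : E → F) (x : E) : F :=
  (R / dist x c) ^ (finrank ℝ E - 2 : ℤ) • f (inversion c R x)

variable {c x : E} {R : ℝ} {f : E → F}

lemma contDiffAt_inversion {m : ℕ∞} (hx : x ≠ c) : ContDiffAt ℝ m (inversion c R) x :=
  contDiffAt_const.inversion contDiffAt_const contDiffAt_id hx

lemma isOpen_image_inversion (hR : R ≠ 0) {U : Set E} (hU : IsOpen U) (hcU : c ∉ U) :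
    IsOpen (inversion c R '' U) := by
  rw [(inversion_involutive c hR).image_eq_preimage_symm, isOpen_iff_mem_nhds]
  intro x hx
  have hxc : x ≠ c := (inversion_eq_center hR).not.1 (ne_of_mem_of_not_mem hx hcU)
  exact (contDiffAt_inversion (m := 0) hxc).continuousAt.preimage_mem_nhds (hU.mem_nhds hx)

lemma kelvinTransform_eq_smul (c : E) (R : ℝ) (f : E → F) :
    kelvinTransform c R f = R ^ (finrank ℝ E - 2 : ℤ) •
      ((fun y => ‖y - c‖ ^ (2 - finrank ℝ E : ℤ)) • (f ∘ inversion c R)) := by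
  ext y
  rw [kelvinTransform, div_zpow, div_eq_mul_inv, ← zpow_neg, neg_sub, mul_smul, dist_eq_norm]
  rfl

lemma contDiffAt_kelvinTransform {m : ℕ∞} (hx : x ≠ c)
    (hf : ContDiffAt ℝ m f (inversion c R x)) : ContDiffAt ℝ m (kelvinTransform c R f) x := by
  rw [kelvinTransform_eq_smul]
  exact contDiffAt_const.smul
    ((contDiffAt_norm_sub_zpow _ hx).smul (hf.comp x (contDiffAt_inversion hx)))

lemma fderiv_comp_inversion_apply_sub_center (hx : x ≠ c)
    (hf : DifferentiableAt ℝ f (inversion c R x)) :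
    fderiv ℝ (f ∘ inversion c R) x (x - c) =
      -(R / dist x c) ^ 2 • fderiv ℝ f (inversion c R x) (x - c) := by
  have hinv := hasFDerivAt_inversion (R := R) hx
  have hreflection : fderiv ℝ (inversion c R) x (x - c) = -(R / dist x c) ^ 2 • (x - c) := by
    rw [hinv.fderiv, smul_apply, neg_smul, ← smul_neg]
    exact congrArg _ (Submodule.reflection_orthogonalComplement_singleton_eq_neg (x - c))
  rw [fderiv_comp x hf hinv.differentiableAt, ContinuousLinearMap.comp_apply, hreflection,
    map_smul]

variable [FiniteDimensional ℝ E]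

lemma laplacian_inversion (hx : x ≠ c) :
    Δ (inversion c R) x = (-2 * (finrank ℝ E - 2) * R ^ 2 / dist x c ^ 4) • (x - c) := by
  have hinv : inversion c R =
      R ^ 2 • ((fun y => ‖y - c‖ ^ (-2 : ℤ)) • fun y => y - c) + fun _ => c := by
    ext y
    simp [inversion, dist_eq_norm, div_eq_mul_inv, mul_pow, mul_smul, zpow_neg]
  have hsub : ContDiffAt ℝ 2 (fun y => y - c) x := contDiffAt_id.sub contDiffAt_const
  have hnorm : ContDiffAt ℝ 2 (fun y => ‖y - c‖ ^ (-2 : ℤ)) x := contDiffAt_norm_sub_zpow (-2) hx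
  have hfderiv : fderiv ℝ (fun y => y - c) x = .id ℝ E := ((hasFDerivAt_id x).sub_const c).fderiv
  rw [hinv, ContDiffAt.laplacian_add (f₁ := R ^ 2 • (_ • _))
      ((hnorm.smul hsub).const_smul (R ^ 2)) contDiffAt_const,
    InnerProductSpace.laplacian_smul _ (hnorm.smul hsub),
    laplacian_smul_of_contDiffAt hnorm hsub, gradient_norm_sub_zpow (-2) hx,
    laplacian_sub_const, laplacian_norm_sub_zpow (-2) hx, hfderiv]
  rw [InnerProductSpace.laplacian_const, Pi.zero_apply, ContinuousLinearMap.id_apply,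
    ← dist_eq_norm]
  generalize x - c = w
  simp only [Int.reduceNeg, Int.reduceSub, zpow_neg, zpow_ofNat]
  push_cast
  module

lemma laplacian_comp_inversion (hx : x ≠ c) (hf : ContDiffAt ℝ 2 f (inversion c R x)) :
    Δ (f ∘ inversion c R) x = ((R / dist x c) ^ 2) ^ 2 • Δ f (inversion c R x)
      + (-2 * (finrank ℝ E - 2) * R ^ 2 / dist x c ^ 4) •
        fderiv ℝ f (inversion c R x) (x - c) := by
  rw [laplacian_comp_of_fderiv_eq_smul_isometry hf (contDiffAt_inversion hx)
    fun v => by rw [(hasFDerivAt_inversion hx).fderiv]; rfl, laplacian_inversion hx, map_smul]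

theorem laplacian_kelvinTransform (hR : R ≠ 0) (hx : x ≠ c)
    (hf : ContDiffAt ℝ 2 f (inversion c R x)) :
    Δ (kelvinTransform c R f) x =
      (R / dist x c) ^ (finrank ℝ E + 2) • Δ f (inversion c R x) := by
  have hdist : dist x c ≠ 0 := dist_ne_zero.2 hx
  have hweight := contDiffAt_norm_sub_zpow (m := 2) (2 - finrank ℝ E : ℤ) hx
  have hfinv : ContDiffAt ℝ 2 (f ∘ inversion c R) x := hf.comp x (contDiffAt_inversion hx)
  have hweight_harmonic : Δ (fun y => ‖y - c‖ ^ (2 - finrank ℝ E : ℤ)) x = 0 := by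
    rw [laplacian_norm_sub_zpow _ hx]
    simp
  rw [kelvinTransform_eq_smul, InnerProductSpace.laplacian_smul _ (hweight.smul hfinv),
    laplacian_smul_of_contDiffAt hweight hfinv, gradient_norm_sub_zpow _ hx,
    hweight_harmonic, zero_smul, add_zero, laplacian_comp_inversion hx hf, map_smul,
    fderiv_comp_inversion_apply_sub_center hx (hf.differentiableAt two_ne_zero), ← dist_eq_norm]
  have hscale :
      R ^ (finrank ℝ E - 2 : ℤ) * dist x c ^ (2 - finrank ℝ E : ℤ) * (R / dist x c) ^ 4 =
        (R / dist x c) ^ (finrank ℝ E + 2) := by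
    rw [← neg_sub (finrank ℝ E : ℤ) 2, zpow_neg, ← div_eq_mul_inv, ← div_zpow,
      ← zpow_natCast, ← zpow_natCast, ← zpow_add₀ (div_ne_zero hR hdist)]
    congr 1
    push_cast
    ring
  generalize x - c = w
  rw [← hscale, zpow_sub₀ hdist _ 2, zpow_ofNat]
  push_cast
  module

theorem stmt_8_general (hR : R ≠ 0) {U : Set E} (hU : IsOpen U) (hcU : c ∉ U)
    (hf : ContDiffOn ℝ 2 f U) :
    ContDiffOn ℝ 2 (kelvinTransform c R f) (inversion c R '' U) ∧
    ∀ x ∈ U, Δ (kelvinTransform c R f) (inversion c R x)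
      = (dist x c / R) ^ (finrank ℝ E + 2) • Δ f x := by
  have hne {x : E} (hx : x ∈ U) : inversion c R x ≠ c :=
    (inversion_eq_center hR).not.2 (ne_of_mem_of_not_mem hx hcU)
  have hf_inv {x : E} (hx : x ∈ U) : ContDiffAt ℝ 2 f (inversion c R (inversion c R x)) := by
    simpa only [inversion_inversion c hR] using hf.contDiffAt (hU.mem_nhds hx)
  constructor
  · rintro _ ⟨x, hx, rfl⟩
    exact (contDiffAt_kelvinTransform (hne hx) (hf_inv hx)).contDiffWithinAt
  · intro x hx
    have hscale : R / dist (inversion c R x) c = dist x c / R := by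
      rw [dist_inversion_center]
      field_simp
    rw [laplacian_kelvinTransform hR (hne hx) (hf_inv hx), inversion_inversion c hR, hscale]

lemma lap_eq_laplacian {n : ℕ} {f : EuclideanSpace ℝ (Fin n) → ℝ} {x : EuclideanSpace ℝ (Fin n)}
    (hf : ContDiffAt ℝ 2 f x) : lap n f x = Δ f x := by
  have hderiv (v : EuclideanSpace ℝ (Fin n)) :
      fderiv ℝ (fun y => fderiv ℝ f y v) x v = fderiv ℝ (fderiv ℝ f) x v v := by
    rw [fderiv_clm_apply (differentiableAt_fderiv_of_contDiffAt_two hf)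
      (differentiableAt_const v)]
    simp
  simp [lap, hderiv, laplacian_eq_sum_fderiv_fderiv (EuclideanSpace.basisFun (Fin n) ℝ)]

lemma kelvinPt_eq_inversion (n : ℕ) (R : ℝ) : kelvinPt n R = inversion 0 R := by
  ext1 x
  simp [kelvinPt, inversion]

lemma kelvin_eq_kelvinTransform {n : ℕ} (hn : 2 ≤ n) (R : ℝ)
    (f : EuclideanSpace ℝ (Fin n) → ℝ) : kelvin n R f = kelvinTransform 0 R f := by
  ext x
  have hexp : (n - 2 : ℤ) = (n - 2 : ℕ) := by lia
  simp [kelvin, kelvinTransform, kelvinPt_eq_inversion, hexp]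

end Kelvin

/-- **Kelvin transform and the Laplacian.**
If `U ⊆ ℝⁿ∖{0}` is open and `f` is `C²` on `U`, then the Kelvin transform `f⋆` is `C²`
on `U* = ι(U)` and `Δf⋆(ξ*) = (|ξ|/Ξ₀)^{n+2}·Δf(ξ)` for all `ξ ∈ U`. -/
theorem stmt_8 (n : ℕ) (hn : 3 ≤ n) (Ξ₀ : ℝ) (hΞ₀ : 0 < Ξ₀)
    (U : Set (EuclideanSpace ℝ (Fin n))) (hU : IsOpen U) (hU0 : (0 : EuclideanSpace ℝ (Fin n)) ∉ U)
    (f : EuclideanSpace ℝ (Fin n) → ℝ) (hf : ContDiffOn ℝ 2 f U) :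
    ContDiffOn ℝ 2 (kelvin n Ξ₀ f) (kelvinPt n Ξ₀ '' U) ∧
    ∀ ξ ∈ U, lap n (kelvin n Ξ₀ f) (kelvinPt n Ξ₀ ξ)
      = (‖ξ‖ / Ξ₀) ^ (n + 2) * lap n f ξ := by
  obtain ⟨hsmooth, hlaplacian⟩ := stmt_8_general hΞ₀.ne' hU hU0 hf
  have hU_star := isOpen_image_inversion hΞ₀.ne' hU hU0
  rw [kelvin_eq_kelvinTransform (by lia), kelvinPt_eq_inversion]
  refine ⟨hsmooth, fun ξ hξ => ?_⟩
  rw [lap_eq_laplacian (hsmooth.contDiffAt (hU_star.mem_nhds ⟨ξ, hξ, rfl⟩)),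
    lap_eq_laplacian (hf.contDiffAt (hU.mem_nhds hξ)), hlaplacian ξ hξ]
  simp

end
end

section
/- (Lipschitz-type estimate for the Taylor remainder of the positive-part power, underlying the difference estimates on H_ρ(w₂) − H_ρ(w₁).) Let ν > 1 and define g : ℝ → ℝ by g(u) = (max(u,0))^ν, and for a, h ∈ ℝ define H(a,h) := g(a+h) − g(a) − ν·(max(a,0))^{ν−1}·h. Then for every a₀ > 0 there is a constant C ≥ 0, depending only on ν and a₀, such that for all a, h₁, h₂ ∈ ℝ with |a| ≤ a₀, |h₁| ≤ a₀ and |h₂| ≤ a₀: |H(a,h₂) − H(a,h₁)| ≤ C·(|h₁| + |h₂|)^{min(ν,2)−1}·|h₂ − h₁|. -/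
/-!
The function `g x = (max x 0) ^ ν` is differentiable, and on every half-line `(-∞, R]` its
derivative `ν (max x 0) ^ (ν - 1)` is Hölder continuous with exponent `min ν 2 - 1`. The increment
between `x` and `y` of the Taylor remainder of `g` at `a` is `g y - g x - g' a (y - x)`, so the mean
value inequality bounds it by `|y - x|` times the oscillation of `g'` about `a` on the segment from
`x` to `y`, whose points lie within `max |x - a| |y - a|` of `a`.
-/

section MeanValue

variable {𝕜 E G : Type*} [RCLike 𝕜] [NormedAddCommGroup E] [NormedSpace ℝ E] [NormedSpace 𝕜 E]
  [NormedAddCommGroup G] [NormedSpace 𝕜 G] {K r : ℝ}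

theorem norm_image_sub_sub_le_of_norm_hasFDerivWithin_sub_le_rpow {f : E → G} {f' : E → E →L[𝕜] G}
    {φ : E →L[𝕜] G} {s : Set E} {a x y : E} (hs : Convex ℝ s)
    (hf : ∀ z ∈ s, HasFDerivWithinAt f (f' z) s z) (hK : 0 ≤ K) (hr : 0 ≤ r)
    (hf' : ∀ z ∈ s, ‖f' z - φ‖ ≤ K * ‖z - a‖ ^ r) (hx : x ∈ s) (hy : y ∈ s) :
    ‖f y - f x - φ (y - x)‖ ≤ K * max ‖x - a‖ ‖y - a‖ ^ r * ‖y - x‖ := by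
  have hsegment : segment ℝ x y ⊆ s := hs.segment_subset hx hy
  refine (convex_segment x y).norm_image_sub_le_of_norm_hasFDerivWithin_le'
    (fun z hz ↦ (hf z (hsegment hz)).mono hsegment) (fun z hz ↦ ?_)
    (left_mem_segment ℝ x y) (right_mem_segment ℝ x y)
  have hza : ‖z - a‖ ≤ max ‖x - a‖ ‖y - a‖ := by
    simpa only [dist_eq_norm] using
      (convexOn_univ_dist a).le_max_of_mem_segment (Set.mem_univ x) (Set.mem_univ y) hz
  calc ‖f' z - φ‖ ≤ K * ‖z - a‖ ^ r := hf' z (hsegment hz)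
    _ ≤ K * max ‖x - a‖ ‖y - a‖ ^ r := by gcongr

theorem norm_image_sub_sub_smul_le_of_norm_hasDerivWithin_sub_le_rpow {f f' : 𝕜 → G} {c : G}
    {s : Set 𝕜} {a x y : 𝕜} (hs : Convex ℝ s)
    (hf : ∀ z ∈ s, HasDerivWithinAt f (f' z) s z) (hK : 0 ≤ K) (hr : 0 ≤ r)
    (hf' : ∀ z ∈ s, ‖f' z - c‖ ≤ K * ‖z - a‖ ^ r) (hx : x ∈ s) (hy : y ∈ s) :
    ‖f y - f x - (y - x) • c‖ ≤ K * max ‖x - a‖ ‖y - a‖ ^ r * ‖y - x‖ := by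
  refine norm_image_sub_sub_le_of_norm_hasFDerivWithin_sub_le_rpow
    (φ := ContinuousLinearMap.toSpanSingleton 𝕜 c) hs
    (fun z hz ↦ (hf z hz).hasFDerivWithinAt) hK hr (fun z hz ↦ ?_) hx hy
  simpa only [map_sub, ContinuousLinearMap.toSpanSingletonLIE_apply] using
    ((ContinuousLinearMap.toSpanSingletonLIE 𝕜 G).norm_map (f' z - c)).trans_le (hf' z hz)

end MeanValue

section Rpow

variable {p : ℝ}

theorem abs_rpow_sub_rpow_le_abs_sub_rpow {x y : ℝ} (hp : 0 ≤ p) (hp1 : p ≤ 1) (hx : 0 ≤ x)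
    (hy : 0 ≤ y) : |x ^ p - y ^ p| ≤ |x - y| ^ p := by
  wlog hyx : y ≤ x generalizing x y
  · simpa only [abs_sub_comm] using this hy hx (le_of_not_ge hyx)
  have hsubadd := Real.rpow_add_le_add_rpow hy (sub_nonneg.2 hyx) hp hp1
  rw [add_sub_cancel] at hsubadd
  rw [abs_of_nonneg (sub_nonneg.2 (Real.rpow_le_rpow hy hyx hp)), abs_of_nonneg (sub_nonneg.2 hyx)]
  linarith

theorem abs_rpow_sub_rpow_le_mul_abs_sub {R x y : ℝ} (hp : 1 ≤ p)
    (hx : x ∈ Set.Icc 0 R) (hy : y ∈ Set.Icc 0 R) :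
    |x ^ p - y ^ p| ≤ p * R ^ (p - 1) * |x - y| := by
  refine (convex_Icc 0 R).norm_image_sub_le_of_norm_hasDerivWithin_le
    (fun z _ ↦ (Real.hasDerivAt_rpow_const (Or.inr hp)).hasDerivWithinAt) (fun z hz ↦ ?_) hy hx
  have hz0 : 0 ≤ z := hz.1
  rw [Real.norm_of_nonneg (by positivity)]
  have hzR : z ≤ R := hz.2
  gcongr

theorem exists_abs_max_zero_rpow_sub_le (hp : 0 ≤ p) (R : ℝ) :
    ∃ K : ℝ, 0 ≤ K ∧ ∀ x ≤ R, ∀ y ≤ R,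
      |max x 0 ^ p - max y 0 ^ p| ≤ K * |x - y| ^ min p 1 := by
  have hcontract (x y : ℝ) : |max x 0 - max y 0| ≤ |x - y| := abs_max_sub_max_le_abs x y 0
  rcases le_total p 1 with hp1 | hp1
  · refine ⟨1, zero_le_one, fun x _ y _ ↦ ?_⟩
    rw [min_eq_left hp1, one_mul]
    calc |max x 0 ^ p - max y 0 ^ p| ≤ |max x 0 - max y 0| ^ p :=
          abs_rpow_sub_rpow_le_abs_sub_rpow hp hp1 (le_max_right x 0) (le_max_right y 0)
      _ ≤ |x - y| ^ p := Real.rpow_le_rpow (abs_nonneg _) (hcontract x y) hp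
  · refine ⟨p * max R 0 ^ (p - 1), by positivity, fun x hx y hy ↦ ?_⟩
    rw [min_eq_right hp1, Real.rpow_one]
    calc |max x 0 ^ p - max y 0 ^ p| ≤ p * max R 0 ^ (p - 1) * |max x 0 - max y 0| :=
          abs_rpow_sub_rpow_le_mul_abs_sub hp1 ⟨le_max_right x 0, max_le_max_right 0 hx⟩
            ⟨le_max_right y 0, max_le_max_right 0 hy⟩
      _ ≤ p * max R 0 ^ (p - 1) * |x - y| :=
          mul_le_mul_of_nonneg_left (hcontract x y) (by positivity)

theorem hasDerivAt_max_zero_rpow (hp : 1 < p) (x : ℝ) :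
    HasDerivAt (fun u : ℝ ↦ max u 0 ^ p) (p * max x 0 ^ (p - 1)) x := by
  have hcont {q : ℝ} (hq : 0 ≤ q) : Continuous fun u : ℝ ↦ max u 0 ^ q :=
    (continuous_id.max continuous_const).rpow_const fun _ ↦ Or.inr hq
  -- Both sides are continuous, so it suffices to differentiate away from the kink at `0`.
  refine hasDerivAt_of_hasDerivAt_of_ne' (x := 0) (g := fun u ↦ p * max u 0 ^ (p - 1))
    (fun u hu ↦ ?_) (hcont (by linarith)).continuousAt
    ((hcont (by linarith)).const_mul p).continuousAt x
  rcases hu.lt_or_gt with hneg | hpos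
  · have hzero : (fun u : ℝ ↦ max u 0 ^ p) =ᶠ[nhds u] fun _ ↦ 0 := by
      filter_upwards [Iio_mem_nhds hneg] with v hv
      rw [max_eq_right hv.le, Real.zero_rpow (by linarith)]
    rw [max_eq_right hneg.le, Real.zero_rpow (by linarith), mul_zero]
    exact (hasDerivAt_const u 0).congr_of_eventuallyEq hzero
  · have hrpow : (fun u : ℝ ↦ max u 0 ^ p) =ᶠ[nhds u] fun v ↦ v ^ p := by
      filter_upwards [Ioi_mem_nhds hpos] with v hv
      rw [max_eq_left hv.le]
    rw [max_eq_left hpos.le]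
    exact (Real.hasDerivAt_rpow_const (Or.inl hpos.ne')).congr_of_eventuallyEq hrpow

theorem exists_abs_max_zero_rpow_sub_sub_le (hp : 1 < p) (R : ℝ) :
    ∃ C : ℝ, 0 ≤ C ∧ ∀ a ≤ R, ∀ x ≤ R, ∀ y ≤ R,
      |max y 0 ^ p - max x 0 ^ p - (y - x) * (p * max a 0 ^ (p - 1))| ≤
        C * max |x - a| |y - a| ^ (min p 2 - 1) * |y - x| := by
  obtain ⟨K, hK, hholder⟩ := exists_abs_max_zero_rpow_sub_le (sub_nonneg.2 hp.le) R
  have hexp : min (p - 1) 1 = min p 2 - 1 := by rw [← min_sub_sub_right]; norm_num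
  rw [hexp] at hholder
  have hexp_nonneg : 0 ≤ min p 2 - 1 := sub_nonneg.2 (le_min hp.le one_le_two)
  refine ⟨p * K, by positivity, fun a ha x hx y hy ↦ ?_⟩
  refine norm_image_sub_sub_smul_le_of_norm_hasDerivWithin_sub_le_rpow (convex_Iic R)
    (fun z _ ↦ (hasDerivAt_max_zero_rpow hp z).hasDerivWithinAt) (by positivity) hexp_nonneg
    (fun z hz ↦ ?_) hx hy
  calc |p * max z 0 ^ (p - 1) - p * max a 0 ^ (p - 1)|
      = p * |max z 0 ^ (p - 1) - max a 0 ^ (p - 1)| := by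
        rw [← mul_sub, abs_mul, abs_of_pos (by linarith)]
    _ ≤ p * (K * |z - a| ^ (min p 2 - 1)) := by gcongr; exact hholder z hz a ha
    _ = p * K * |z - a| ^ (min p 2 - 1) := (mul_assoc _ _ _).symm

end Rpow

theorem stmt_15_general {ν : ℝ} (hν : 1 < ν) (R : ℝ) (H : ℝ → ℝ → ℝ)
    (hH : ∀ a h : ℝ, H a h =
      (max (a + h) 0) ^ ν - (max a 0) ^ ν - ν * (max a 0) ^ (ν - 1) * h) :
    ∃ C : ℝ, 0 ≤ C ∧ ∀ a h₁ h₂ : ℝ, a ≤ R → a + h₁ ≤ R → a + h₂ ≤ R →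
      |H a h₂ - H a h₁| ≤ C * (|h₁| + |h₂|) ^ (min ν 2 - 1) * |h₂ - h₁| := by
  obtain ⟨C, hC, hbound⟩ := exists_abs_max_zero_rpow_sub_sub_le hν R
  have hexp_nonneg : 0 ≤ min ν 2 - 1 := sub_nonneg.2 (le_min hν.le one_le_two)
  refine ⟨C, hC, fun a h₁ h₂ ha h₁R h₂R ↦ ?_⟩
  have hincrement : H a h₂ - H a h₁ = max (a + h₂) 0 ^ ν - max (a + h₁) 0 ^ ν -
      (a + h₂ - (a + h₁)) * (ν * max a 0 ^ (ν - 1)) := by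
    rw [hH, hH]; ring
  calc |H a h₂ - H a h₁| ≤ C * max |h₁| |h₂| ^ (min ν 2 - 1) * |h₂ - h₁| := by
        simpa only [hincrement, add_sub_cancel_left, add_sub_add_left_eq_sub] using
          hbound a ha (a + h₁) h₁R (a + h₂) h₂R
    _ ≤ C * (|h₁| + |h₂|) ^ (min ν 2 - 1) * |h₂ - h₁| := by
        gcongr
        exact max_le_add_of_nonneg (abs_nonneg h₁) (abs_nonneg h₂)

/-- **Lipschitz-type estimate for the Taylor remainder of the positive-part power.**
For `ν > 1`, `g u = (max u 0)^ν`, `H a h = g (a+h) − g a − ν (max a 0)^{ν−1} h`,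
for every `a₀ > 0` there is `C ≥ 0` depending only on `ν, a₀` such that for
`|a| ≤ a₀`, `|h₁| ≤ a₀`, `|h₂| ≤ a₀`:
`|H a h₂ − H a h₁| ≤ C (|h₁| + |h₂|)^{min ν 2 − 1} |h₂ − h₁|`. -/
theorem stmt_15 (ν : ℝ) (hν : 1 < ν) (a₀ : ℝ) (ha₀ : 0 < a₀)
    (H : ℝ → ℝ → ℝ)
    (hH : ∀ a h : ℝ, H a h =
      (max (a + h) 0) ^ ν - (max a 0) ^ ν - ν * (max a 0) ^ (ν - 1) * h) :
    ∃ C : ℝ, 0 ≤ C ∧ ∀ a h₁ h₂ : ℝ, |a| ≤ a₀ → |h₁| ≤ a₀ → |h₂| ≤ a₀ →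
      |H a h₂ - H a h₁| ≤ C * (|h₁| + |h₂|) ^ (min ν 2 - 1) * |h₂ - h₁| := by
  obtain ⟨C, hC, hbound⟩ := stmt_15_general hν (2 * a₀) H hH
  exact ⟨C, hC, fun a h₁ h₂ ha h₁a h₂a ↦ hbound a h₁ h₂ (by grind) (by grind) (by grind)⟩
end
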